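/- arXiv:1411.4541 — 3 statements merged into one kernel-verified Lean document; each statement's English description precedes it below -/
import Mathlib

section
/- For every real t and real y > 0, ∫_{-∞}^{∞} e(u² y) e(−t u) du = ((1+i)/(2√y)) · e(−t²/(4y)), where e(x) = exp(2πix) and the integral is understood as an improper (Fresnel-type) integral. -/
open Complex Filter

/-- `e x = exp(2πix)`. -/
noncomputable def e (x : ℝ) : ℂ := Complex.exp (2 * Real.pi * Complex.I * x)

/-!
Integration by parts bounds `∫ u in A..B, exp (-b * u ^ 2)` by `1 / (‖b‖ * A)`, uniformly over the
closed half-plane `0 ≤ re b`. Letting `B → ∞`, the truncated Gaussian integral differs from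
`√(π / b) / 2` by at most `1 / (‖b‖ * A)` when `0 < re b`. Both sides are continuous on the closed
half-plane minus the origin, so the estimate persists on the imaginary axis, where it gives the
convergence of the Fresnel integral.
Completing the square reduces the stated integral to a translate of this one.
-/

open MeasureTheory Set Topology
open scoped Real

lemma norm_cexp_neg_mul_sq_le_one {b : ℂ} (hb : 0 ≤ b.re) (u : ℝ) :
    ‖cexp (-b * (u : ℂ) ^ 2)‖ ≤ 1 := by
  rw [norm_cexp_neg_mul_sq, Real.exp_le_one_iff]
  nlinarith [mul_nonneg hb (sq_nonneg u)]

lemma hasDerivAt_cexp_neg_mul_sq_div {b : ℂ} (hb : b ≠ 0) {u : ℝ} (hu : u ≠ 0) :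
    HasDerivAt (fun u : ℝ => cexp (-b * (u : ℂ) ^ 2) / (2 * b * u))
      (-(cexp (-b * (u : ℂ) ^ 2) + cexp (-b * (u : ℂ) ^ 2) / (2 * b * (u : ℂ) ^ 2))) u := by
  have hu' : (u : ℂ) ≠ 0 := ofReal_ne_zero.mpr hu
  have hexp : HasDerivAt (fun z : ℂ => cexp (-b * z ^ 2))
      (cexp (-b * u ^ 2) * (-b * (2 * u))) u := by
    simpa using ((hasDerivAt_pow 2 (u : ℂ)).const_mul (-b)).cexp
  have hlin : HasDerivAt (fun z : ℂ => 2 * b * z) (2 * b) u := by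
    simpa using (hasDerivAt_id (u : ℂ)).const_mul (2 * b)
  refine (hexp.fun_div hlin (by simp [hb, hu])).comp_ofReal.congr_deriv ?_
  field_simp
  ring

lemma integral_cexp_neg_mul_sq_eq_sub {b : ℂ} (hb : b ≠ 0) {A B : ℝ} (h0 : (0 : ℝ) ∉ uIcc A B) :
    ∫ u in A..B, cexp (-b * (u : ℂ) ^ 2) =
      cexp (-b * (A : ℂ) ^ 2) / (2 * b * A) - cexp (-b * (B : ℂ) ^ 2) / (2 * b * B) -
        ∫ u in A..B, cexp (-b * (u : ℂ) ^ 2) / (2 * b * (u : ℂ) ^ 2) := by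
  have hne : ∀ u ∈ uIcc A B, u ≠ 0 := fun u hu hu0 => h0 (hu0 ▸ hu)
  have hgauss : IntervalIntegrable (fun u : ℝ => cexp (-b * (u : ℂ) ^ 2)) volume A B :=
    Continuous.intervalIntegrable (by fun_prop) A B
  have hrem : IntervalIntegrable (fun u : ℝ => cexp (-b * (u : ℂ) ^ 2) / (2 * b * (u : ℂ) ^ 2))
      volume A B :=
    ContinuousOn.intervalIntegrable <| ContinuousOn.div (by fun_prop) (by fun_prop)
      fun u hu => by simp [hb, hne u hu]
  have hftc := intervalIntegral.integral_eq_sub_of_hasDerivAt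
    (fun u hu => hasDerivAt_cexp_neg_mul_sq_div hb (hne u hu)) (hgauss.add hrem).neg
  rw [intervalIntegral.integral_neg, intervalIntegral.integral_add hgauss hrem] at hftc
  linear_combination -hftc

lemma integral_inv_sq {A B : ℝ} (h0 : (0 : ℝ) ∉ uIcc A B) :
    ∫ u in A..B, (u ^ 2)⁻¹ = A⁻¹ - B⁻¹ := by
  have hzpow := integral_zpow (n := -2) (.inr ⟨by decide, h0⟩)
  rw [show (-2 + 1 : ℤ) = -1 by norm_num, zpow_neg_one, zpow_neg_one] at hzpow
  simp only [zpow_neg, zpow_ofNat] at hzpow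
  rw [hzpow]
  push_cast
  ring

lemma norm_integral_cexp_neg_mul_sq_div_le {b : ℂ} (hb : 0 ≤ b.re) {A B : ℝ} (hA : 0 < A)
    (hAB : A ≤ B) :
    ‖∫ u in A..B, cexp (-b * (u : ℂ) ^ 2) / (2 * b * (u : ℂ) ^ 2)‖ ≤
      (2 * ‖b‖)⁻¹ * (A⁻¹ - B⁻¹) := by
  have h0 : (0 : ℝ) ∉ uIcc A B := notMem_uIcc_of_lt hA (hA.trans_le hAB)
  rw [← integral_inv_sq h0, ← intervalIntegral.integral_const_mul]
  refine intervalIntegral.norm_integral_le_of_norm_le hAB (.of_forall fun u _ => ?_) ?_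
  · rw [norm_div, div_eq_mul_inv, ← mul_inv]
    simpa using mul_le_of_le_one_left (by positivity) (norm_cexp_neg_mul_sq_le_one hb u)
  · refine ContinuousOn.intervalIntegrable (continuousOn_const.mul ?_)
    exact ContinuousOn.inv₀ (by fun_prop) fun u hu => pow_ne_zero 2 fun hu0 => h0 (hu0 ▸ hu)

lemma norm_integral_cexp_neg_mul_sq_le {b : ℂ} (hb : 0 ≤ b.re) (hb0 : b ≠ 0) {A B : ℝ}
    (hA : 0 < A) (hAB : A ≤ B) :
    ‖∫ u in A..B, cexp (-b * (u : ℂ) ^ 2)‖ ≤ 1 / (‖b‖ * A) := by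
  have hboundary : ∀ u : ℝ, 0 < u →
      ‖cexp (-b * (u : ℂ) ^ 2) / (2 * b * u)‖ ≤ (2 * ‖b‖)⁻¹ * u⁻¹ := by
    intro u hu
    rw [norm_div, div_eq_mul_inv, ← mul_inv]
    simpa [abs_of_pos hu] using
      mul_le_of_le_one_left (by positivity) (norm_cexp_neg_mul_sq_le_one hb u)
  rw [integral_cexp_neg_mul_sq_eq_sub hb0 (notMem_uIcc_of_lt hA (hA.trans_le hAB))]
  calc
    _ ≤ (2 * ‖b‖)⁻¹ * A⁻¹ + (2 * ‖b‖)⁻¹ * B⁻¹ + (2 * ‖b‖)⁻¹ * (A⁻¹ - B⁻¹) :=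
      norm_sub_le_of_le
        (norm_sub_le_of_le (hboundary A hA) (hboundary B (hA.trans_le hAB)))
        (norm_integral_cexp_neg_mul_sq_div_le hb hA hAB)
    _ = 1 / (‖b‖ * A) := by
      field_simp
      ring

lemma norm_integral_cexp_neg_mul_sq_sub_le_of_re_pos {b : ℂ} (hb : 0 < b.re) {A : ℝ} (hA : 0 < A) :
    ‖(∫ u in (0 : ℝ)..A, cexp (-b * (u : ℂ) ^ 2)) - (π / b) ^ (1 / 2 : ℂ) / 2‖ ≤
      1 / (‖b‖ * A) := by
  have hb0 : b ≠ 0 := by rintro rfl; simp at hb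
  have hlim : Tendsto (fun B : ℝ => ∫ u in (0 : ℝ)..B, cexp (-b * (u : ℂ) ^ 2)) atTop
      (𝓝 ((π / b) ^ (1 / 2 : ℂ) / 2)) := by
    rw [← integral_gaussian_complex_Ioi hb]
    exact intervalIntegral_tendsto_integral_Ioi 0 (integrable_cexp_neg_mul_sq hb).integrableOn
      tendsto_id
  refine le_of_tendsto (hlim.const_sub _).norm ?_
  filter_upwards [eventually_ge_atTop A] with B hAB
  rw [intervalIntegral.integral_interval_sub_left (Continuous.intervalIntegrable (by fun_prop) _ _)
    (Continuous.intervalIntegrable (by fun_prop) _ _), intervalIntegral.integral_symm, norm_neg]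
  exact norm_integral_cexp_neg_mul_sq_le hb.le hb0 hA hAB

lemma ofReal_div_mem_slitPlane {b : ℂ} (hb : 0 ≤ b.re) (hb0 : b ≠ 0) {r : ℝ} (hr : 0 < r) :
    r / b ∈ slitPlane := by
  have hnormSq : 0 < normSq b := normSq_pos.mpr hb0
  rw [mem_slitPlane_iff, div_re, div_im]
  simp only [ofReal_re, ofReal_im, zero_mul, zero_div, add_zero, zero_sub]
  rcases hb.lt_or_eq with hre | hre
  · exact .inl (by positivity)
  · have him : b.im ≠ 0 := fun him => hb0 (Complex.ext hre.symm him)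
    exact .inr (neg_ne_zero.mpr (by positivity))

lemma norm_integral_cexp_neg_mul_sq_sub_le {b : ℂ} (hb : 0 ≤ b.re) (hb0 : b ≠ 0) {A : ℝ}
    (hA : 0 < A) :
    ‖(∫ u in (0 : ℝ)..A, cexp (-b * (u : ℂ) ^ 2)) - (π / b) ^ (1 / 2 : ℂ) / 2‖ ≤
      1 / (‖b‖ * A) := by
  have hshift : Tendsto (fun ε : ℝ => b + ε) (𝓝[>] 0) (𝓝 b) := by
    have hcont : Continuous fun ε : ℝ => b + ε := by fun_prop
    simpa using (hcont.tendsto 0).mono_left nhdsWithin_le_nhds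
  have hint : Continuous fun c : ℂ => ∫ u in (0 : ℝ)..A, cexp (-c * (u : ℂ) ^ 2) :=
    intervalIntegral.continuous_parametric_intervalIntegral_of_continuous' (by fun_prop) _ _
  have hvalue : ContinuousAt (fun c : ℂ => (π / c) ^ (1 / 2 : ℂ) / 2) b :=
    ((continuousAt_const.div continuousAt_id hb0).cpow continuousAt_const
      (ofReal_div_mem_slitPlane hb hb0 Real.pi_pos)).div_const 2
  have hbound : ContinuousAt (fun c : ℂ => 1 / (‖c‖ * A)) b :=
    continuousAt_const.div (by fun_prop) (by simp [hb0, hA.ne'])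
  refine le_of_tendsto_of_tendsto ((hint.continuousAt.sub hvalue).norm.tendsto.comp hshift)
    (hbound.tendsto.comp hshift) ?_
  filter_upwards [self_mem_nhdsWithin] with ε hε
  refine norm_integral_cexp_neg_mul_sq_sub_le_of_re_pos ?_ hA
  simpa using add_pos_of_nonneg_of_pos hb hε

lemma tendsto_integral_cexp_neg_mul_sq_atTop {b : ℂ} (hb : 0 ≤ b.re) (hb0 : b ≠ 0) :
    Tendsto (fun A : ℝ => ∫ u in (0 : ℝ)..A, cexp (-b * (u : ℂ) ^ 2)) atTop
      (𝓝 ((π / b) ^ (1 / 2 : ℂ) / 2)) := by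
  rw [tendsto_iff_norm_sub_tendsto_zero]
  refine squeeze_zero' (.of_forall fun A => norm_nonneg _)
    ((eventually_gt_atTop 0).mono fun A => norm_integral_cexp_neg_mul_sq_sub_le hb hb0) ?_
  exact tendsto_const_nhds.div_atTop (tendsto_id.const_mul_atTop (norm_pos_iff.mpr hb0))

lemma tendsto_integral_atBot_atTop_of_even {E : Type*} [NormedAddCommGroup E] [NormedSpace ℝ E]
    {g : ℝ → E} {L : E} (hg : LocallyIntegrable g) (heven : g.Even)
    (hlim : Tendsto (fun A : ℝ => ∫ u in (0 : ℝ)..A, g u) atTop (𝓝 L)) :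
    Tendsto (fun p : ℝ × ℝ => ∫ u in p.1..p.2, g u) (atBot ×ˢ atTop) (𝓝 (L + L)) := by
  have hint : ∀ a b : ℝ, IntervalIntegrable g volume a b := fun a b =>
    (hg.integrableOn_isCompact isCompact_uIcc).intervalIntegrable
  have hsplit : ∀ p : ℝ × ℝ, ∫ u in p.1..p.2, g u =
      (∫ u in (0 : ℝ)..(-p.1), g u) + ∫ u in (0 : ℝ)..p.2, g u := by
    intro p
    have hreflect := intervalIntegral.integral_comp_neg (a := p.1) (b := 0) g
    simp only [heven _, neg_zero] at hreflect
    rw [← hreflect, intervalIntegral.integral_add_adjacent_intervals (hint _ _) (hint _ _)]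
  simp only [hsplit]
  exact (hlim.comp (tendsto_neg_atBot_atTop.comp tendsto_fst)).add (hlim.comp tendsto_snd)

lemma tendsto_integral_cexp_neg_mul_sub_sq {b : ℂ} (hb : 0 ≤ b.re) (hb0 : b ≠ 0) (s : ℝ) :
    Tendsto (fun p : ℝ × ℝ => ∫ u in p.1..p.2, cexp (-b * ((u - s : ℝ) : ℂ) ^ 2))
      (atBot ×ˢ atTop) (𝓝 ((π / b) ^ (1 / 2 : ℂ))) := by
  have hcentered := tendsto_integral_atBot_atTop_of_even
    (Continuous.locallyIntegrable (by fun_prop)) (fun u => by simp)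
    (tendsto_integral_cexp_neg_mul_sq_atTop hb hb0)
  rw [add_halves] at hcentered
  have htranslate : Tendsto (fun p : ℝ × ℝ => (p.1 - s, p.2 - s)) (atBot ×ˢ atTop)
      (atBot ×ˢ atTop) :=
    (tendsto_atBot_add_const_right _ (-s) tendsto_id).prodMap
      (tendsto_atTop_add_const_right _ (-s) tendsto_id)
  simp only [intervalIntegral.integral_comp_sub_right fun u : ℝ => cexp (-b * (u : ℂ) ^ 2)]
  exact hcentered.comp htranslate

lemma e_sq_mul_mul_e_neg_mul (t u : ℝ) {y : ℝ} (hy : y ≠ 0) :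
    e (u ^ 2 * y) * e (-t * u) =
      e (-t ^ 2 / (4 * y)) * cexp (-(-2 * π * I * y) * ((u - t / (2 * y) : ℝ) : ℂ) ^ 2) := by
  have hy' : (y : ℂ) ≠ 0 := ofReal_ne_zero.mpr hy
  simp only [e, ← Complex.exp_add]
  congr 1
  push_cast
  field_simp
  ring

lemma I_div_two_mul_cpow_half {y : ℝ} (hy : 0 < y) :
    (I / (2 * y)) ^ (1 / 2 : ℂ) = (1 + I) / (2 * √y) := by
  have hsq : I / (2 * y) = ((1 + I) / (2 * √y)) ^ 2 := by
    have hsqrt : (√y : ℂ) ^ 2 = y := by exact_mod_cast Real.sq_sqrt hy.le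
    rw [div_pow, mul_pow, hsqrt, add_sq, I_sq]
    ring
  have hre : 0 < ((1 + I) / (2 * √y)).re := by
    have hdiv : (1 + I) / (2 * √y) = (1 + I) / ((2 * √y : ℝ) : ℂ) := by push_cast; rfl
    rw [hdiv, div_ofReal_re]
    simp [hy]
  rw [hsq, one_div, sq_cpow_two_inv hre]

/-- For `y < 0` the principal root `(I / (2 * y)) ^ (1 / 2)` is `(1 - I) / (2 * √(-y))`. -/
theorem stmt_10_general (t : ℝ) {y : ℝ} (hy : y ≠ 0) :
    Tendsto (fun p : ℝ × ℝ => ∫ u in p.1..p.2, e (u ^ 2 * y) * e (-t * u)) (atBot ×ˢ atTop)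
      (𝓝 ((I / (2 * y)) ^ (1 / 2 : ℂ) * e (-t ^ 2 / (4 * y)))) := by
  have hfresnel := tendsto_integral_cexp_neg_mul_sub_sq (b := -2 * π * I * y) (by simp)
    (by simp [hy, Real.pi_ne_zero]) (t / (2 * y))
  have hvalue : π / (-2 * π * I * y) = I / (2 * y) := by
    have hy' : (y : ℂ) ≠ 0 := ofReal_ne_zero.mpr hy
    field_simp
    simp
  simp only [e_sq_mul_mul_e_neg_mul t _ hy, intervalIntegral.integral_const_mul]
  rw [← hvalue, mul_comm _ (e _)]
  exact hfresnel.const_mul _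

/-- The Fresnel-type integral identity
`∫ e(u²y) e(−tu) du = (1+i)/(2√y) · e(−t²/(4y))`, as an improper integral. -/
theorem stmt_10 (t y : ℝ) (hy : 0 < y) :
    Tendsto (fun A : ℝ => ∫ u in (-A)..A, e (u ^ 2 * y) * e (-t * u)) atTop
      (nhds ((1 + Complex.I) / (2 * Real.sqrt y) * e (-t ^ 2 / (4 * y)))) := by
  rw [← I_div_two_mul_cpow_half hy]
  exact (stmt_10_general t hy.ne').comp (tendsto_neg_atTop_atBot.prodMk tendsto_id)
end

section
/- With Ei the exponential integral and 0 < ε < 1/2, ∫_{(ε,1−ε)∪(1+ε,∞)} e^{−t} log|1−t| dt = (1/e)(−Ei(1) + Ei(ε) − Ei(−ε)) + O(ε log(1/ε)). -/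
open MeasureTheory

/-- The exponential integral `Ei(x) = ∫₀ˣ (eᵗ−1)/t dt + log|x| + γ`. -/
noncomputable def Ei (x : ℝ) : ℝ :=
  (∫ t in (0:ℝ)..x, (Real.exp t - 1) / t) + Real.log |x| + Real.eulerMascheroniConstant

/-!
The integrals of `e⁻ᵗ log|1 - t|` over intervals and half-lines have closed forms in terms of `Ei`:
substituting `v = 1 - t` or `u = t - 1` reduces them to `∫₀ˣ eᵛ log v dv = eˣ log x - Ei x + γ`
(integration by parts) and `∫ₓ^∞ e⁻ᵘ log u du = e⁻ˣ log x - Ei (-x)` (the same identity at `-x`,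
together with `Γ'(1) = -γ`). The boundary terms at `ε` combine to `Ei ε - Ei (-ε)` and
`2 sinh ε log ε = O(ε log(1/ε))`, while replacing `Ei (1 - ε)` by `Ei 1` costs only the integral
of `eᵛ log v` over `(1 - ε, 1)`.
-/

open Set intervalIntegral

section ByParts

variable {f f' : ℝ → ℝ}

theorem continuous_dslope_of_differentiable (hf : Differentiable ℝ f) (a : ℝ) :
    Continuous (dslope f a) :=
  continuousOn_univ.1 ((continuousOn_dslope Filter.univ_mem).2
    ⟨hf.continuous.continuousOn, hf a⟩)

theorem intervalIntegrable_sub_div_sub (hf : Differentiable ℝ f) (c a b : ℝ) :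
    IntervalIntegrable (fun t => (f t - f c) / (t - c)) volume a b := by
  refine ((continuous_dslope_of_differentiable hf c).intervalIntegrable a b).congr_ae
    (ae_restrict_of_ae ?_)
  filter_upwards [Measure.ae_ne volume c] with t ht
  rw [dslope_of_ne f ht, slope_def_field]

theorem continuous_sub_mul_log (hf : Differentiable ℝ f) :
    Continuous fun v => (f v - f 0) * Real.log v := by
  have hfactor (v : ℝ) :
      (f v - f 0) * Real.log v = dslope f 0 v * (v * Real.log v) := by
    rw [← sub_smul_dslope f 0 v, sub_zero, smul_eq_mul]
    ring
  simp_rw [hfactor]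
  exact (continuous_dslope_of_differentiable hf 0).mul Real.continuous_mul_log

theorem intervalIntegrable_mul_log {g : ℝ → ℝ} (hg : Continuous g) (a b : ℝ) :
    IntervalIntegrable (fun v => g v * Real.log v) volume a b :=
  intervalIntegrable_log'.continuousOn_mul hg.continuousOn

theorem integral_deriv_mul_log (hf : ∀ x, HasDerivAt f (f' x) x) (hf' : Continuous f') (x : ℝ) :
    ∫ v in (0 : ℝ)..x, f' v * Real.log v =
      (f x - f 0) * Real.log x - ∫ v in (0 : ℝ)..x, (f v - f 0) / v := by
  have hdiff : Differentiable ℝ f := fun x => (hf x).differentiableAt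
  have hlog := intervalIntegrable_mul_log hf' 0 x
  have hquot : IntervalIntegrable (fun v => (f v - f 0) / v) volume 0 x := by
    simpa only [sub_zero] using intervalIntegrable_sub_div_sub hdiff 0 0 x
  have hderiv : ∀ v ∈ Ioo (min 0 x) (max 0 x) \ {0},
      HasDerivAt (fun v => (f v - f 0) * Real.log v) (f' v * Real.log v + (f v - f 0) / v) v :=
    fun v hv => ((hf v).sub_const (f 0)).fun_mul (Real.hasDerivAt_log hv.2)
  have hFTC := integral_eq_of_hasDerivAt_off_countable _ _ (countable_singleton 0)
    (continuous_sub_mul_log hdiff).continuousOn hderiv (hlog.add hquot)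
  rw [integral_add hlog hquot, sub_self, zero_mul, sub_zero] at hFTC
  exact eq_sub_of_add_eq hFTC

end ByParts

/- `x` may have either sign: `Real.log x` is `log |x|`, and both `Real.log 0` and the `log |0|` in
`Ei 0` are `0`. -/
theorem integral_zero_exp_mul_log (x : ℝ) :
    ∫ v in (0 : ℝ)..x, Real.exp v * Real.log v =
      Real.exp x * Real.log x - Ei x + Real.eulerMascheroniConstant := by
  rw [integral_deriv_mul_log Real.hasDerivAt_exp Real.continuous_exp, Real.exp_zero, Ei,
    Real.log_abs]
  ring

theorem integral_exp_mul_log (a b : ℝ) :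
    ∫ v in a..b, Real.exp v * Real.log v =
      (Real.exp b * Real.log b - Ei b) - (Real.exp a * Real.log a - Ei a) := by
  have hint := intervalIntegrable_mul_log Real.continuous_exp 0
  rw [← integral_interval_sub_left (hint b) (hint a), integral_zero_exp_mul_log,
    integral_zero_exp_mul_log]
  ring

theorem integral_exp_neg_mul_log (a b : ℝ) :
    ∫ u in a..b, Real.exp (-u) * Real.log u =
      (Real.exp (-a) * Real.log a - Ei (-a)) - (Real.exp (-b) * Real.log b - Ei (-b)) := by
  have hneg := intervalIntegral.integral_comp_neg (a := a) (b := b)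
    fun v => Real.exp v * Real.log v
  simpa only [Real.log_neg_eq_log, integral_exp_mul_log] using hneg

theorem hasDerivAt_complexGamma_of_re_pos {s : ℂ} (hs : 0 < s.re) :
    HasDerivAt Complex.Gamma
      (∫ t : ℝ in Ioi 0, (t : ℂ) ^ (s - 1) * (Real.log t * Real.exp (-t))) s := by
  refine (Complex.hasDerivAt_GammaIntegral hs).congr_of_eventuallyEq ?_
  filter_upwards [(isOpen_Ioi.preimage Complex.continuous_re).mem_nhds hs] with z hz
    using Complex.Gamma_eq_integral hz

theorem integral_Ioi_zero_exp_neg_mul_log :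
    ∫ u in Ioi (0 : ℝ), Real.exp (-u) * Real.log u = -Real.eulerMascheroniConstant := by
  have hGamma := (hasDerivAt_complexGamma_of_re_pos (s := 1) (by simp)).unique
    Complex.hasDerivAt_Gamma_one
  simp only [sub_self, Complex.cpow_zero, one_mul, ← Complex.ofReal_mul,
    integral_complex_ofReal] at hGamma
  simp only [mul_comm (Real.exp _)]
  exact_mod_cast hGamma

theorem integrableOn_Ioi_zero_exp_neg_mul_log :
    IntegrableOn (fun u => Real.exp (-u) * Real.log u) (Ioi 0) := by
  refine Integrable.of_integral_ne_zero ?_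
  rw [integral_Ioi_zero_exp_neg_mul_log]
  linarith [Real.one_half_lt_eulerMascheroniConstant]

theorem integral_Ioi_exp_neg_mul_log (x : ℝ) :
    ∫ u in Ioi x, Real.exp (-u) * Real.log u = Real.exp (-x) * Real.log x - Ei (-x) := by
  have hint : IntervalIntegrable (fun u => Real.exp (-u) * Real.log u) volume x 0 :=
    intervalIntegrable_mul_log (by fun_prop) x 0
  have hEi : Ei 0 = Real.eulerMascheroniConstant := by simp [Ei]
  rw [← integral_interval_add_Ioi' hint integrableOn_Ioi_zero_exp_neg_mul_log,
    integral_Ioi_zero_exp_neg_mul_log, integral_exp_neg_mul_log, neg_zero, hEi, Real.log_zero]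
  ring

theorem integral_exp_neg_mul_log_abs_one_sub (a b : ℝ) :
    ∫ t in a..b, Real.exp (-t) * Real.log |1 - t| =
      1 / Real.exp 1 * ∫ v in (1 - b)..(1 - a), Real.exp v * Real.log v := by
  rw [← integral_comp_sub_left (fun v => Real.exp v * Real.log v) 1,
    ← intervalIntegral.integral_const_mul]
  congr 1 with t
  rw [Real.log_abs, Real.exp_sub, Real.exp_neg]
  field_simp

theorem integral_Ioi_comp_add_left {E : Type*} [NormedAddCommGroup E] [NormedSpace ℝ E]
    (f : ℝ → E) (a c : ℝ) :
    ∫ u in Ioi a, f (c + u) = ∫ t in Ioi (c + a), f t := by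
  have h := (measurePreserving_add_left volume c).setIntegral_preimage_emb
    (measurableEmbedding_addLeft c) f (Ioi (c + a))
  rwa [preimage_const_add_Ioi, add_sub_cancel_left] at h

theorem integral_Ioi_exp_neg_mul_log_abs_one_sub (a : ℝ) :
    ∫ t in Ioi (1 + a), Real.exp (-t) * Real.log |1 - t| =
      1 / Real.exp 1 * ∫ u in Ioi a, Real.exp (-u) * Real.log u := by
  rw [← integral_Ioi_comp_add_left, ← MeasureTheory.integral_const_mul]
  congr 1 with u
  rw [sub_add_cancel_left, abs_neg, Real.log_abs, neg_add, Real.exp_add, Real.exp_neg 1]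
  ring

theorem truncated_integral_sub_Ei_eq {ε : ℝ} (hε : ε ≤ 1 / 2) :
    (∫ t in Ioo ε (1 - ε), Real.exp (-t) * Real.log |1 - t|) +
        (∫ t in Ioi (1 + ε), Real.exp (-t) * Real.log |1 - t|) -
        (1 / Real.exp 1) * (-(Ei 1) + Ei ε - Ei (-ε)) =
      -(1 / Real.exp 1 * ((∫ v in (1 - ε)..1, Real.exp v * Real.log v) +
        2 * Real.sinh ε * Real.log ε)) := by
  rw [← integral_Ioc_eq_integral_Ioo, ← integral_of_le (by linarith),
    integral_exp_neg_mul_log_abs_one_sub, sub_sub_cancel,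
    integral_Ioi_exp_neg_mul_log_abs_one_sub, integral_Ioi_exp_neg_mul_log,
    integral_exp_mul_log, integral_exp_mul_log, Real.log_one, Real.sinh_eq]
  ring

theorem abs_integral_exp_mul_log_le {a b : ℝ} (ha : 0 < a) (hab : a ≤ b) (hb : b ≤ 1) :
    |∫ v in a..b, Real.exp v * Real.log v| ≤ Real.exp b * Real.log (1 / a) * (b - a) := by
  have hbound : ∀ v ∈ uIoc a b,
      ‖Real.exp v * Real.log v‖ ≤ Real.exp b * Real.log (1 / a) := by
    intro v hv
    rw [uIoc_of_le hab] at hv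
    have hlog : |Real.log v| ≤ Real.log (1 / a) := by
      rw [abs_of_nonpos (Real.log_nonpos (ha.trans hv.1).le (hv.2.trans hb)), one_div,
        Real.log_inv]
      exact neg_le_neg (Real.log_le_log ha hv.1.le)
    rw [norm_mul, Real.norm_eq_abs, Real.norm_eq_abs, Real.abs_exp]
    gcongr
    exact hv.2
  simpa only [Real.norm_eq_abs, abs_of_nonneg (sub_nonneg.2 hab)] using
    intervalIntegral.norm_integral_le_of_norm_le_const hbound

theorem sinh_le_mul_exp (x : ℝ) : Real.sinh x ≤ x * Real.exp x := by
  have hexp : (1 - 2 * x) * Real.exp x ≤ Real.exp (-x) := by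
    calc (1 - 2 * x) * Real.exp x ≤ Real.exp (-(2 * x)) * Real.exp x := by
          gcongr
          exact Real.one_sub_le_exp_neg (2 * x)
      _ = Real.exp (-x) := by
          rw [← Real.exp_add]
          ring_nf
  rw [Real.sinh_eq]
  linarith

theorem abs_two_mul_sinh_mul_log_le {x : ℝ} (hx0 : 0 < x) (hx1 : x ≤ 1) :
    |2 * Real.sinh x * Real.log x| ≤ Real.exp 1 * (2 * (x * Real.log (1 / x))) := by
  have hsinh : Real.sinh x ≤ x * Real.exp 1 :=
    (sinh_le_mul_exp x).trans (by gcongr)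
  have hlog : 0 ≤ Real.log (1 / x) := Real.log_nonneg ((one_le_div hx0).2 hx1)
  calc |2 * Real.sinh x * Real.log x| = 2 * Real.sinh x * Real.log (1 / x) := by
        rw [abs_mul, abs_of_nonneg (by positivity), abs_of_nonpos (Real.log_nonpos hx0.le hx1),
          one_div, Real.log_inv]
    _ ≤ 2 * (x * Real.exp 1) * Real.log (1 / x) := by gcongr
    _ = Real.exp 1 * (2 * (x * Real.log (1 / x))) := by ring

/-- `∫_{(ε,1−ε)∪(1+ε,∞)} e^{−t} log|1−t| dt = (1/e)(−Ei(1) + Ei(ε) − Ei(−ε)) + O(ε log(1/ε))`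
as `ε → 0⁺`, with an absolute implied constant. -/
theorem stmt_12 :
    ∃ C : ℝ, ∀ ε : ℝ, 0 < ε → ε < 1 / 2 →
      |(∫ t in Set.Ioo ε (1 - ε), Real.exp (-t) * Real.log |1 - t|) +
          (∫ t in Set.Ioi (1 + ε), Real.exp (-t) * Real.log |1 - t|) -
          (1 / Real.exp 1) * (-(Ei 1) + Ei ε - Ei (-ε))| ≤
        C * (ε * Real.log (1 / ε)) := by
  refine ⟨3, fun ε hε0 hε => ?_⟩
  have hnear : |∫ v in (1 - ε)..1, Real.exp v * Real.log v| ≤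
      Real.exp 1 * (ε * Real.log (1 / ε)) := by
    calc |∫ v in (1 - ε)..1, Real.exp v * Real.log v|
        ≤ Real.exp 1 * Real.log (1 / (1 - ε)) * (1 - (1 - ε)) :=
          abs_integral_exp_mul_log_le (by linarith) (by linarith) le_rfl
      _ = Real.exp 1 * (ε * Real.log (1 / (1 - ε))) := by ring
      _ ≤ Real.exp 1 * (ε * Real.log (1 / ε)) := by
          have : 0 < 1 - ε := by linarith
          gcongr
          linarith
  have hsinh := abs_two_mul_sinh_mul_log_le hε0 (by linarith)
  rw [truncated_integral_sub_Ei_eq hε.le, abs_neg, abs_mul, abs_of_pos (by positivity),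
    one_div, inv_mul_le_iff₀ (Real.exp_pos 1)]
  exact (abs_add_le _ _).trans (by linarith)
end

section
/- Let d be prime and χ a primitive Dirichlet character mod d. For c coprime to d and integers a₁, r, ℓ₂, one has ∑_{a₂ mod cd} χ(a₂) S(−a₁a₂, r, c) e(a₂ℓ₂/(cd)) = τ(χ)·χ(c ℓ₂) · ∑_{a₂ mod c} S(−a₁a₂ d, r, c) e(a₂ℓ₂/c) / √d · √d, i.e. equals √d·χ(cℓ₂) times ∑_{a₂ mod c} S(−a₁ a₂ d, r, c) e(a₂ ℓ₂ / c), when χ is the real quadratic character mod d ≡ 1 (mod 4). -/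
open Complex

/-- The Kloosterman sum `S(n, m, c)`. -/
noncomputable def klS (n m : ℤ) (c : ℕ) [NeZero c] : ℂ :=
  ∑ a : (ZMod c)ˣ,
    e (((n * ((a : ZMod c).val : ℤ) + m * (((a⁻¹ : (ZMod c)ˣ) : ZMod c).val : ℤ) : ℤ) : ℝ) / c)

/-!
Writing `a₂ = x * d + y * c` with `x` mod `c` and `y` mod `d`, the Kloosterman factor sees only `x`
and `χ` sees only `y`, so the sum is the Kloosterman sum on the right times
`∑ χ(c * y) e(y * ℓ₂ / d)`. For primitive `χ` the latter is `χ(c) * χ⁻¹(ℓ₂)` times the Gauss sum.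

The Gauss sum of the quadratic character modulo a prime `p = 2m + 1` has the same square as Gauss's
product `P = ∏ (ψ(l) - ψ(-l))` over `1 ≤ l ≤ m`, so only its sign is at stake. Both are values of
integer polynomials at a primitive `p`-th root of unity, whose minimal polynomial is
`(X - 1) ^ (p - 1)` modulo `p`; comparing the terms of order `m` at `X = 1` modulo `p`, where the
quadratic character is `j ↦ j ^ m`, determines the sign. For `ψ(k) = e((m + 1) * k / p)`, a square
root of the standard character, and even `m`, the product `P` is a product of positive sines.
-/

section EulerOperator

open Polynomial

/-- The Euler operator `X * d/dX` on polynomials. It multiplies `X ^ k` by `k`, and its `n`-th power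
reads off the leading term at `1` of a polynomial vanishing there to order `n`. -/
noncomputable def eulerOp (R : Type*) [CommRing R] : Module.End R R[X] :=
  LinearMap.mulLeft R X ∘ₗ derivative

variable {R : Type*} [CommRing R]

lemma eulerOp_apply (f : R[X]) : eulerOp R f = X * derivative f := rfl

lemma eulerOp_pow_monomial (n k : ℕ) (a : R) :
    (eulerOp R ^ n) (monomial k a) = monomial k (a * (k : R) ^ n) := by
  induction n with
  | zero => simp
  | succ n ih =>
    rw [pow_succ', Module.End.mul_apply, ih, eulerOp_apply, derivative_monomial, pow_succ,
      ← mul_assoc]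
    rcases k with _ | k
    · simp
    · rw [Nat.add_sub_cancel, X_mul_monomial]

lemma eval_one_eulerOp_pow_sum_monomial {ι : Type*} (s : Finset ι) (n : ℕ) (k : ι → ℕ)
    (a : ι → R) :
    ((eulerOp R ^ n) (∑ i ∈ s, monomial (k i) (a i))).eval 1 = ∑ i ∈ s, a i * (k i : R) ^ n := by
  simp [map_sum, eulerOp_pow_monomial, eval_finsetSum]

lemma eval_one_eulerOp_pow_X_sub_one_pow_mul (n : ℕ) (g : R[X]) :
    ((eulerOp R ^ n) ((X - 1) ^ n * g)).eval 1 = n.factorial * g.eval 1 := by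
  induction n generalizing g with
  | zero => simp
  | succ n ih =>
    have eulerOp_mul : eulerOp R ((X - 1) ^ (n + 1) * g) =
        (X - 1) ^ n * (X * ((n + 1 : R[X]) * g + (X - 1) * derivative g)) := by
      simp only [eulerOp_apply, derivative_mul, derivative_pow, derivative_sub, derivative_X,
        derivative_one, map_natCast, Nat.add_sub_cancel]
      push_cast
      ring
    rw [pow_succ, Module.End.mul_apply, eulerOp_mul, ih, Nat.factorial_succ]
    simp only [eval_mul, eval_add, eval_sub, eval_X, eval_one, eval_natCast]
    push_cast
    ring

lemma eval_one_eulerOp_pow_of_dvd {n : ℕ} {f : R[X]} (hf : (X - 1) ^ (n + 1) ∣ f) :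
    ((eulerOp R ^ n) f).eval 1 = 0 := by
  obtain ⟨g, rfl⟩ := hf
  rw [pow_succ, mul_assoc, eval_one_eulerOp_pow_X_sub_one_pow_mul]
  simp

lemma eval_one_eulerOp_pow_card_prod {ι : Type*} (s : Finset ι) (f : ι → R[X])
    (hf : ∀ i ∈ s, (f i).eval 1 = 0) :
    ((eulerOp R ^ s.card) (∏ i ∈ s, f i)).eval 1 =
      s.card.factorial * ∏ i ∈ s, (derivative (f i)).eval 1 := by
  have X_sub_one_dvd : ∀ i ∈ s, ∃ g : R[X], f i = (X - 1) * g := fun i hi => by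
    simpa only [C_1, Dvd.dvd] using dvd_iff_isRoot.2 (hf i hi)
  choose! g hg using X_sub_one_dvd
  have derivative_eval : ∀ i ∈ s, (derivative (f i)).eval 1 = (g i).eval 1 := fun i hi => by
    simp [hg i hi]
  rw [Finset.prod_congr rfl hg, Finset.prod_mul_distrib, Finset.prod_const,
    eval_one_eulerOp_pow_X_sub_one_pow_mul, eval_prod, Finset.prod_congr rfl derivative_eval]

end EulerOperator

section ModP

open Polynomial

lemma cyclotomic_self_eq_X_sub_one_pow (p : ℕ) [hp : Fact p.Prime] (R : Type*) [CommRing R]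
    [CharP R p] : cyclotomic p R = (X - 1) ^ (p - 1) := by
  simpa using cyclotomic_mul_prime_eq_pow_of_not_dvd R (p := p) hp.out.not_dvd_one

lemma X_sub_one_pow_dvd_map_of_aeval_eq_zero {p : ℕ} [hp : Fact p.Prime] {K : Type*} [Field K]
    [CharZero K] {ζ : K} (hζ : IsPrimitiveRoot ζ p) {f : ℤ[X]} (hf : aeval ζ f = 0) :
    (X - 1) ^ (p - 1) ∣ f.map (Int.castRingHom (ZMod p)) := by
  have cyclotomic_dvd : cyclotomic p ℤ ∣ f := by
    rw [cyclotomic_eq_minpoly hζ hp.out.pos]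
    exact minpoly.isIntegrallyClosed_dvd (hζ.isIntegral hp.out.pos) hf
  rw [← cyclotomic_self_eq_X_sub_one_pow p (ZMod p), ← map_cyclotomic p (Int.castRingHom (ZMod p))]
  exact Polynomial.map_dvd _ cyclotomic_dvd

lemma sum_pow_card_sub_one (F : Type*) [Field F] [Fintype F] :
    ∑ x : F, x ^ (Fintype.card F - 1) = -1 := by
  classical
  have card_ne : Fintype.card F - 1 ≠ 0 := by have := Fintype.one_lt_card (α := F); lia
  rw [← Finset.add_sum_erase _ _ (Finset.mem_univ 0), zero_pow card_ne, zero_add,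
    Finset.sum_congr rfl fun x hx =>
      FiniteField.pow_card_sub_one_eq_one x (Finset.ne_of_mem_erase hx),
    Finset.sum_const, Finset.card_erase_of_mem (Finset.mem_univ _), Finset.card_univ, nsmul_one,
    Nat.cast_sub Fintype.card_pos, Nat.cast_card_eq_zero, Nat.cast_one, zero_sub]

lemma sq_factorial_half {p m : ℕ} [Fact p.Prime] (hpm : p = 2 * m + 1) :
    (m.factorial : ZMod p) ^ 2 = (-1) ^ (m + 1) := by
  have reflect : ∀ l ∈ Finset.range m,
      ((m + (m - 1 - l) + 1 : ℕ) : ZMod p) = -1 * ((l + 1 : ℕ) : ZMod p) := fun l hl => by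
    have hl := Finset.mem_range.1 hl
    rw [neg_one_mul, eq_neg_iff_add_eq_zero, ← Nat.cast_add,
      show m + (m - 1 - l) + 1 + (l + 1) = p by lia, ZMod.natCast_self]
  have wilson := ZMod.wilsons_lemma p
  rw [show p - 1 = m + m by lia, ← Finset.prod_range_add_one_eq_factorial, Finset.prod_range_add,
    ← Finset.prod_range_reflect (fun k => m + k + 1), Nat.cast_mul, Nat.cast_prod, Nat.cast_prod,
    Finset.prod_congr rfl reflect, Finset.prod_mul_distrib, Finset.prod_const, Finset.card_range,
    ← Nat.cast_prod, Finset.prod_range_add_one_eq_factorial] at wilson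
  have neg_one_pow_sq : ((-1 : ZMod p) ^ m) ^ 2 = 1 := by
    rw [← pow_mul', (even_two_mul m).neg_one_pow]
  linear_combination (-1) ^ m * wilson - (m.factorial : ZMod p) ^ 2 * neg_one_pow_sq

end ModP

section GaussSumSign

open Polynomial

/-- Gauss's product `∏ (ψ(l) - ψ(-l))` over `1 ≤ l ≤ m`. When `ψ` is primitive modulo `2m + 1` it
is a square root of `±(2m + 1)` that is visibly a product of sines. -/
def gaussProduct {n : ℕ} {R : Type*} [CommRing R] (ψ : AddChar (ZMod n) R) (m : ℕ) : R :=
  ∏ l ∈ Finset.range m, (ψ ((l + 1 : ℕ) : ZMod n) - ψ (-((l + 1 : ℕ) : ZMod n)))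

lemma isPrimitiveRoot_of_isPrimitive {n : ℕ} [NeZero n] {M : Type*} [CommMonoid M]
    {ψ : AddChar (ZMod n) M} (hψ : ψ.IsPrimitive) {a : ZMod n} (ha : IsUnit a) :
    IsPrimitiveRoot (ψ a) n where
  pow_eq_one := by
    rw [← AddChar.map_nsmul_eq_pow, nsmul_eq_mul, ZMod.natCast_self, zero_mul,
      AddChar.map_zero_eq_one]
  dvd_of_pow_eq_one l hl := by
    rwa [← AddChar.map_nsmul_eq_pow, hψ.zmod_char_eq_one_iff, nsmul_eq_mul, ha.mul_left_eq_zero,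
      ZMod.natCast_eq_zero_iff] at hl

variable {p m : ℕ}

lemma isUnit_two_of_eq_two_mul_add_one (hpm : p = 2 * m + 1) : IsUnit (2 : ZMod p) := by
  exact_mod_cast (ZMod.isUnit_iff_coprime 2 p).2 (by simp [hpm])

lemma gaussProduct_sq {K : Type*} [CommRing K] [IsDomain K] (hpm : p = 2 * m + 1)
    {ψ : AddChar (ZMod p) K} (hψ : ψ.IsPrimitive) : gaussProduct ψ m ^ 2 = (-1) ^ m * p := by
  have : NeZero p := ⟨by lia⟩
  have hμ : IsPrimitiveRoot (ψ 2) (m + m + 1) := by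
    simpa only [hpm, two_mul] using
      isPrimitiveRoot_of_isPrimitive hψ (isUnit_two_of_eq_two_mul_add_one hpm)
  have sq_factor : ∀ l ∈ Finset.range m,
      (ψ ((l + 1 : ℕ) : ZMod p) - ψ (-((l + 1 : ℕ) : ZMod p))) ^ 2 =
        -1 * ((1 - ψ 2 ^ (l + 1)) * (1 - ψ 2 ^ (m + (m - 1 - l) + 1))) := fun l hl => by
    have hl := Finset.mem_range.1 hl
    set a : ZMod p := ((l + 1 : ℕ) : ZMod p) with ha
    have neg_a : ((m + (m - 1 - l) + 1 : ℕ) : ZMod p) = -a := by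
      rw [eq_neg_iff_add_eq_zero, ← Nat.cast_add,
        show m + (m - 1 - l) + 1 + (l + 1) = p by lia, ZMod.natCast_self]
    have mul_eq_one : ψ a * ψ (-a) = 1 := by
      rw [← AddChar.map_add_eq_mul, add_neg_cancel, AddChar.map_zero_eq_one]
    simp only [← AddChar.map_nsmul_eq_pow, nsmul_eq_mul, neg_a, ← ha, mul_two,
      AddChar.map_add_eq_mul]
    linear_combination (ψ a * ψ (-a) - 1) * mul_eq_one
  rw [gaussProduct, ← Finset.prod_pow, Finset.prod_congr rfl sq_factor, Finset.prod_mul_distrib,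
    Finset.prod_const, Finset.card_range, Finset.prod_mul_distrib,
    Finset.prod_range_reflect (fun k => 1 - ψ 2 ^ (m + k + 1)), ← Finset.prod_range_add
    (fun k => 1 - ψ 2 ^ (k + 1)), hμ.prod_one_sub_pow_eq_order, hpm]
  push_cast
  ring

lemma quadraticChar_neg_one_eq_neg_one_pow [Fact p.Prime] (hpm : p = 2 * m + 1) :
    quadraticChar (ZMod p) (-1) = (-1) ^ m := by
  rw [quadraticChar_neg_one (by rw [ZMod.ringChar_zmod_n]; lia), ZMod.card,
    ZMod.χ₄_eq_neg_one_pow (by lia), show p / 2 = m by lia]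

lemma addChar_apply_eq_pow_val {n : ℕ} [NeZero n] {M : Type*} [CommMonoid M]
    (ψ : AddChar (ZMod n) M) (a : ZMod n) : ψ a = ψ 1 ^ a.val := by
  rw [← AddChar.map_nsmul_eq_pow, nsmul_one, ZMod.natCast_zmod_val]

/-- A polynomial whose value at `ψ 1` is `gaussProduct ψ m`. -/
noncomputable def gaussProductPoly (R : Type*) [CommRing R] (n m : ℕ) : R[X] :=
  ∏ l ∈ Finset.range m, (X ^ ((l + 1 : ℕ) : ZMod n).val - X ^ (-((l + 1 : ℕ) : ZMod n)).val)

lemma aeval_gaussProductPoly {n : ℕ} [NeZero n] {R : Type*} [CommRing R]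
    (ψ : AddChar (ZMod n) R) (m : ℕ) :
    aeval (ψ 1) (gaussProductPoly ℤ n m) = gaussProduct ψ m := by
  simp only [gaussProductPoly, gaussProduct, addChar_apply_eq_pow_val ψ (Nat.cast _),
    addChar_apply_eq_pow_val ψ (-Nat.cast _), map_prod, map_sub, map_pow, aeval_X]

lemma map_gaussProductPoly {R S : Type*} [CommRing R] [CommRing S] (f : R →+* S) (n m : ℕ) :
    (gaussProductPoly R n m).map f = gaussProductPoly S n m := by
  simp only [gaussProductPoly, Polynomial.map_prod, Polynomial.map_sub, Polynomial.map_pow, map_X]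

lemma eval_one_eulerOp_pow_gaussProductPoly [Fact p.Prime] (hpm : p = 2 * m + 1) :
    ((eulerOp (ZMod p) ^ m) (gaussProductPoly (ZMod p) p m)).eval 1 = (-1) ^ (m + 1) * 2 ^ m := by
  have derivative_eval : ∀ l ∈ Finset.range m,
      (derivative (X ^ ((l + 1 : ℕ) : ZMod p).val - X ^ (-((l + 1 : ℕ) : ZMod p)).val :
        (ZMod p)[X])).eval 1 = 2 * ((l + 1 : ℕ) : ZMod p) := fun l _ => by
    simp only [derivative_sub, derivative_X_pow, eval_sub, eval_mul, eval_C, eval_pow, eval_X,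
      one_pow, mul_one, ZMod.natCast_zmod_val]
    ring
  have leading_eq := eval_one_eulerOp_pow_card_prod (R := ZMod p) (Finset.range m)
    (fun l => X ^ ((l + 1 : ℕ) : ZMod p).val - X ^ (-((l + 1 : ℕ) : ZMod p)).val) (by simp)
  rw [Finset.card_range, Finset.prod_congr rfl derivative_eval, Finset.prod_mul_distrib,
    Finset.prod_const, Finset.card_range, ← Nat.cast_prod,
    Finset.prod_range_add_one_eq_factorial] at leading_eq
  rw [gaussProductPoly, leading_eq, ← sq_factorial_half hpm]
  ring

/-- The polynomial `∑ (j/p) X ^ (2j)`, whose value at `ψ 1` is the quadratic Gauss sum for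
`ψ ^ 2`. -/
noncomputable def quadraticGaussSumPoly (p : ℕ) [Fact p.Prime] : ℤ[X] :=
  ∑ j : ZMod p, monomial (2 * j.val) (quadraticChar (ZMod p) j)

lemma aeval_quadraticGaussSumPoly [Fact p.Prime] {R : Type*} [CommRing R]
    (ψ : AddChar (ZMod p) R) :
    aeval (ψ 1) (quadraticGaussSumPoly p) =
      gaussSum ((quadraticChar (ZMod p)).ringHomComp (Int.castRingHom R)) (ψ ^ 2) := by
  simp only [quadraticGaussSumPoly, gaussSum, map_sum, aeval_monomial, AddChar.pow_apply,
    MulChar.ringHomComp_apply, algebraMap_int_eq, pow_mul', ← addChar_apply_eq_pow_val ψ]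

lemma map_quadraticGaussSumPoly [Fact p.Prime] (hpm : p = 2 * m + 1) :
    (quadraticGaussSumPoly p).map (Int.castRingHom (ZMod p)) =
      ∑ j : ZMod p, monomial (2 * j.val) (j ^ m) := by
  have euler_criterion : ∀ j : ZMod p, ((quadraticChar (ZMod p) j : ℤ) : ZMod p) = j ^ m :=
    fun j => by
      rw [quadraticChar_eq_pow_of_char_ne_two' (by rw [ZMod.ringChar_zmod_n]; lia), ZMod.card,
        show p / 2 = m by lia]
  simp only [quadraticGaussSumPoly, Polynomial.map_sum, map_monomial, Int.coe_castRingHom,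
    euler_criterion]

lemma eval_one_eulerOp_pow_map_quadraticGaussSumPoly [Fact p.Prime] (hpm : p = 2 * m + 1) :
    ((eulerOp (ZMod p) ^ m) ((quadraticGaussSumPoly p).map (Int.castRingHom (ZMod p)))).eval 1 =
      -2 ^ m := by
  have summand : ∀ j : ZMod p, j ^ m * ((2 * j.val : ℕ) : ZMod p) ^ m = 2 ^ m * j ^ (p - 1) :=
    fun j => by
      rw [Nat.cast_mul, ZMod.natCast_zmod_val, Nat.cast_ofNat, show p - 1 = m + m by lia]
      ring
  have sum_pow := sum_pow_card_sub_one (ZMod p)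
  rw [ZMod.card] at sum_pow
  rw [map_quadraticGaussSumPoly hpm, eval_one_eulerOp_pow_sum_monomial,
    Finset.sum_congr rfl fun j _ => summand j, ← Finset.mul_sum, sum_pow, mul_neg_one]

variable {K : Type*} [Field K] [CharZero K] {ψ : AddChar (ZMod p) K}

/- The integer polynomial `∑ (j/p) X ^ (2j) - ε ∏ (X ^ l - X ^ (-l))` vanishes at `ψ 1`, so modulo
`p` it is divisible by `(X - 1) ^ (p - 1)`; `ε` is read off from its term of order `m < p - 1`. -/
lemma intCast_eq_neg_one_pow_of_gaussSum_eq [hp : Fact p.Prime] (hpm : p = 2 * m + 1)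
    (hψ : ψ.IsPrimitive) {ε : ℤ}
    (h : gaussSum ((quadraticChar (ZMod p)).ringHomComp (Int.castRingHom K)) (ψ ^ 2) =
      ε * gaussProduct ψ m) :
    (ε : ZMod p) = (-1) ^ m := by
  have hm : m ≠ 0 := by rintro rfl; exact hp.out.ne_one hpm
  have aeval_eq_zero :
      aeval (ψ 1) (quadraticGaussSumPoly p - C ε * gaussProductPoly ℤ p m) = 0 := by
    rw [map_sub, map_mul, aeval_C, aeval_quadraticGaussSumPoly, aeval_gaussProductPoly, h]
    simp
  have dvd_map := (pow_dvd_pow _ (by lia : m + 1 ≤ p - 1)).trans <|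
    X_sub_one_pow_dvd_map_of_aeval_eq_zero (isPrimitiveRoot_of_isPrimitive hψ isUnit_one)
      aeval_eq_zero
  have leading_eq := eval_one_eulerOp_pow_of_dvd dvd_map
  rw [Polynomial.map_sub, Polynomial.map_mul, map_C, map_gaussProductPoly, ← smul_eq_C_mul, map_sub,
    map_smul, eval_sub, eval_smul, smul_eq_mul, eval_one_eulerOp_pow_map_quadraticGaussSumPoly hpm,
    eval_one_eulerOp_pow_gaussProductPoly hpm, eq_intCast] at leading_eq
  have neg_one_pow_sq : ((-1 : ZMod p) ^ m) ^ 2 = 1 := by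
    rw [← pow_mul', (even_two_mul m).neg_one_pow]
  refine ((isUnit_two_of_eq_two_mul_add_one hpm).pow m).mul_left_inj.1 ?_
  linear_combination (-1) ^ m * leading_eq - (ε : ZMod p) * 2 ^ m * neg_one_pow_sq

lemma mulChar_eq_of_sq_eq_one_of_ne_one {F R : Type*} [Field F] [Finite F] [CommRing R]
    [IsDomain R] {χ₁ χ₂ : MulChar F R} (h₁ : χ₁ ^ 2 = 1) (h₁' : χ₁ ≠ 1) (h₂ : χ₂ ^ 2 = 1)
    (h₂' : χ₂ ≠ 1) : χ₁ = χ₂ := by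
  obtain ⟨g, hg⟩ := IsCyclic.exists_generator (α := Fˣ)
  have apply_generator : ∀ χ : MulChar F R, χ ^ 2 = 1 → χ ≠ 1 → χ g = -1 := fun χ hχ hχ' => by
    have mul_self_eq_one : χ g * χ g = 1 := by
      rw [← sq, ← MulChar.pow_apply_coe, hχ, MulChar.one_apply_coe]
    exact (mul_self_eq_one_iff.1 mul_self_eq_one).resolve_left fun h =>
      hχ' ((MulChar.eq_iff hg χ 1).2 (by rw [h, MulChar.one_apply_coe]))
  rw [MulChar.eq_iff hg, apply_generator χ₁ h₁ h₁', apply_generator χ₂ h₂ h₂']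

theorem gaussSum_sq_eq_neg_one_pow_mul_gaussProduct [hp : Fact p.Prime] (hpm : p = 2 * m + 1)
    {χ : MulChar (ZMod p) K} (hχ2 : χ ^ 2 = 1) (hχ1 : χ ≠ 1) (hψ : ψ.IsPrimitive) :
    gaussSum χ (ψ ^ 2) = (-1) ^ m * gaussProduct ψ m := by
  have : Fact (2 < p) := ⟨by have := hp.out.one_lt; lia⟩
  have quadraticChar_ne_one' : (quadraticChar (ZMod p)).ringHomComp (Int.castRingHom K) ≠ 1 :=
    (MulChar.ringHomComp_ne_one_iff Int.cast_injective).2 <|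
      quadraticChar_ne_one (by rw [ZMod.ringChar_zmod_n]; lia)
  have isQuadratic := (quadraticChar_isQuadratic (ZMod p)).comp (Int.castRingHom K)
  obtain rfl := mulChar_eq_of_sq_eq_one_of_ne_one hχ2 hχ1 isQuadratic.sq_eq_one
    quadraticChar_ne_one'
  have isPrimitive_sq : (ψ ^ 2).IsPrimitive := AddChar.IsPrimitive.of_ne_one fun h => by
    have apply_two : ψ 2 = 1 := by
      simpa [AddChar.pow_apply, ← AddChar.map_nsmul_eq_pow] using DFunLike.congr_fun h 1
    exact (isUnit_two_of_eq_two_mul_add_one hpm).ne_zero ((hψ.zmod_char_eq_one_iff p 2).1 apply_two)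
  have sq_eq_sq : gaussSum ((quadraticChar (ZMod p)).ringHomComp (Int.castRingHom K)) (ψ ^ 2) ^ 2 =
      gaussProduct ψ m ^ 2 := by
    rw [gaussSum_sq hχ1 isQuadratic isPrimitive_sq, gaussProduct_sq hpm hψ,
      MulChar.ringHomComp_apply, quadraticChar_neg_one_eq_neg_one_pow hpm, ZMod.card]
    simp
  obtain ⟨ε, hε, gaussSum_eq⟩ : ∃ ε : ℤ, (ε = 1 ∨ ε = -1) ∧ _ = ε * gaussProduct ψ m :=
    (sq_eq_sq_iff_eq_or_eq_neg.1 sq_eq_sq).elim (fun h => ⟨1, by simp, by simpa using h⟩)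
      fun h => ⟨-1, by simp, by simpa using h⟩
  have ε_eq : ε = (-1) ^ m := by
    have mod_p := intCast_eq_neg_one_pow_of_gaussSum_eq hpm hψ gaussSum_eq
    have neg_one_ne_one := ZMod.neg_one_ne_one (n := p)
    rcases hε with rfl | rfl <;> rcases m.even_or_odd with hm | hm <;>
      simp_all [hm.neg_one_pow, eq_comm]
  rw [gaussSum_eq, ε_eq]
  push_cast
  rfl

end GaussSumSign

section SineProduct

lemma mulShift_stdAddChar_natCast {n m : ℕ} [NeZero n] (hnm : n = 2 * m + 1) (k : ℕ) :
    ZMod.stdAddChar.mulShift (m + 1 : ZMod n) k =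
      (-1) ^ k * Complex.exp ((Real.pi * k / n : ℝ) * I) := by
  have hn : (n : ℂ) ≠ 0 := NeZero.ne _
  have hnm' : (n : ℂ) = 2 * m + 1 := by exact_mod_cast hnm
  rw [AddChar.mulShift_apply, ← Complex.exp_pi_mul_I, ← Complex.exp_nat_mul, ← Complex.exp_add,
    show ((m + 1 : ZMod n) * k) = (((m + 1) * k : ℤ) : ZMod n) by push_cast; rfl,
    ZMod.stdAddChar_coe]
  congr 1
  push_cast
  field_simp
  rw [hnm']
  ring

lemma mulShift_stdAddChar_natCast_sub_neg {n m : ℕ} [NeZero n] (hnm : n = 2 * m + 1) (k : ℕ) :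
    ZMod.stdAddChar.mulShift (m + 1 : ZMod n) k - ZMod.stdAddChar.mulShift (m + 1 : ZMod n) (-k) =
      (-1) ^ k * I * (2 * Real.sin (Real.pi * k / n) : ℝ) := by
  rw [AddChar.map_neg_eq_inv, mulShift_stdAddChar_natCast hnm, mul_inv, ← inv_pow, inv_neg_one,
    ← Complex.exp_neg, ← mul_sub, ← neg_mul, Complex.ofReal_mul, Complex.ofReal_sin,
    Complex.ofReal_ofNat, Complex.two_sin]
  linear_combination (-(-1) ^ k * (Complex.exp (-(Real.pi * k / n : ℝ) * I) -
    Complex.exp ((Real.pi * k / n : ℝ) * I))) * Complex.I_sq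

lemma prod_neg_one_pow_mul_I (q : ℕ) :
    ∏ l ∈ Finset.range (2 * q), ((-1) ^ (l + 1) * I) = 1 := by
  induction q with
  | zero => simp
  | succ q ih =>
    rw [mul_add_one, Finset.prod_range_succ, Finset.prod_range_succ, ih,
      pow_succ _ (2 * q + 1), pow_succ _ (2 * q), (even_two_mul q).neg_one_pow]
    linear_combination -Complex.I_sq

lemma gaussProduct_mulShift_stdAddChar {n m : ℕ} [NeZero n] (hnm : n = 2 * m + 1) (hm : Even m) :
    gaussProduct (ZMod.stdAddChar.mulShift (m + 1 : ZMod n)) m =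
      (∏ l ∈ Finset.range m, 2 * Real.sin (Real.pi * (l + 1 : ℕ) / n) : ℝ) := by
  obtain ⟨q, rfl⟩ := hm.two_dvd
  rw [gaussProduct,
    Finset.prod_congr rfl fun l _ => mulShift_stdAddChar_natCast_sub_neg hnm (l + 1),
    Finset.prod_mul_distrib, prod_neg_one_pow_mul_I, one_mul, Complex.ofReal_prod]

lemma mulShift_stdAddChar_sq {n m : ℕ} [NeZero n] (hnm : n = 2 * m + 1) :
    (ZMod.stdAddChar.mulShift (m + 1 : ZMod n)) ^ 2 = ZMod.stdAddChar := by
  have two_mul_half : (2 : ℕ) * (m + 1 : ZMod n) = 1 := by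
    rw [← sub_eq_zero, ← ZMod.natCast_self n, hnm]
    push_cast
    ring
  rw [AddChar.pow_mulShift, AddChar.mulShift_mulShift, mul_comm, two_mul_half, AddChar.mulShift_one]

lemma addChar_isPrimitive_of_pow {R M : Type*} [CommRing R] [CommMonoid M] {ψ : AddChar R M}
    {k : ℕ} (h : (ψ ^ k).IsPrimitive) : ψ.IsPrimitive := fun a ha mulShift_eq_one =>
  h ha <| AddChar.ext _ _ fun x => by
    rw [AddChar.mulShift_apply, AddChar.pow_apply, ← AddChar.mulShift_apply, mulShift_eq_one,
      AddChar.one_apply, one_pow]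

lemma isPrimitive_mulShift_stdAddChar {n m : ℕ} [NeZero n] (hnm : n = 2 * m + 1) :
    (ZMod.stdAddChar.mulShift (m + 1 : ZMod n)).IsPrimitive :=
  addChar_isPrimitive_of_pow (k := 2) <|
    (mulShift_stdAddChar_sq hnm).symm ▸ ZMod.isPrimitive_stdAddChar n

lemma gaussProduct_mulShift_stdAddChar_eq_sqrt {n m : ℕ} [NeZero n] (hnm : n = 2 * m + 1)
    (hm : Even m) : gaussProduct (ZMod.stdAddChar.mulShift (m + 1 : ZMod n)) m = Real.sqrt n := by
  have sq_eq := gaussProduct_sq hnm (isPrimitive_mulShift_stdAddChar hnm)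
  rw [gaussProduct_mulShift_stdAddChar hnm hm, hm.neg_one_pow, one_mul] at sq_eq
  have prod_nonneg :
      0 ≤ ∏ l ∈ Finset.range m, 2 * Real.sin (Real.pi * (l + 1 : ℕ) / n) :=
    Finset.prod_nonneg fun l hl => mul_nonneg zero_le_two <|
      Real.sin_nonneg_of_nonneg_of_le_pi (by positivity) <|
        div_le_of_le_mul₀ (by positivity) (by positivity) <| by
          have := Finset.mem_range.1 hl
          gcongr
          lia
  rw [gaussProduct_mulShift_stdAddChar hnm hm, Complex.ofReal_inj, eq_comm,
    Real.sqrt_eq_iff_eq_sq (by positivity) prod_nonneg]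
  exact_mod_cast sq_eq.symm

theorem gaussSum_eq_sqrt {p : ℕ} [hp : Fact p.Prime] (hp4 : p % 4 = 1)
    {χ : DirichletCharacter ℂ p} (hχ2 : χ ^ 2 = 1) (hχ1 : χ ≠ 1) :
    gaussSum χ ZMod.stdAddChar = Real.sqrt p := by
  obtain ⟨m, hpm, hm⟩ : ∃ m, p = 2 * m + 1 ∧ Even m :=
    ⟨p / 2, by lia, Nat.even_iff.2 (by lia)⟩
  rw [← mulShift_stdAddChar_sq hpm, gaussSum_sq_eq_neg_one_pow_mul_gaussProduct hpm hχ2 hχ1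
    (isPrimitive_mulShift_stdAddChar hpm), hm.neg_one_pow, one_mul,
    gaussProduct_mulShift_stdAddChar_eq_sqrt hpm hm]

end SineProduct

section ChineseRemainder

lemma e_intCast_div (k : ℤ) (n : ℕ) [NeZero n] :
    e ((k : ℝ) / n) = ZMod.stdAddChar (k : ZMod n) := by
  rw [ZMod.stdAddChar_coe, e]
  congr 1
  push_cast
  ring

lemma e_val_mul_div {n : ℕ} [NeZero n] (a : ZMod n) (l : ℤ) :
    e ((((a.val : ℤ) * l : ℤ) : ℝ) / n) = ZMod.stdAddChar (a * (l : ZMod n)) := by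
  rw [e_intCast_div, Int.cast_mul, Int.cast_natCast, ZMod.natCast_zmod_val]

lemma klS_congr {n n' : ℤ} (m : ℤ) {c : ℕ} [NeZero c] (h : (n : ZMod c) = n') :
    klS n m c = klS n' m c := by
  simp only [klS, e_intCast_div]
  push_cast
  rw [h]

variable {c d : ℕ} [NeZero c] [NeZero d]

lemma bijective_natCast_val_mul_add_val_mul (hcd : c.Coprime d) :
    Function.Bijective fun z : ZMod c × ZMod d =>
      ((z.1.val * d + z.2.val * c : ℕ) : ZMod (c * d)) := by
  refine (Fintype.bijective_iff_injective_and_card _).2 ⟨?_, by simp [ZMod.card]⟩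
  rintro ⟨x, y⟩ ⟨x', y'⟩ hxy
  have mod_c := congrArg (ZMod.castHom (dvd_mul_right c d) (ZMod c)) hxy
  have mod_d := congrArg (ZMod.castHom (dvd_mul_left d c) (ZMod d)) hxy
  simp only [Nat.cast_add, Nat.cast_mul, map_add, map_mul, map_natCast, ZMod.natCast_zmod_val,
    ZMod.natCast_self, mul_zero, add_zero, zero_add] at mod_c mod_d
  rw [((ZMod.isUnit_iff_coprime d c).2 hcd.symm).mul_left_inj] at mod_c
  rw [((ZMod.isUnit_iff_coprime c d).2 hcd).mul_left_inj] at mod_d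
  rw [mod_c, mod_d]

lemma stdAddChar_natCast_val_mul_add_val_mul (x : ZMod c) (y : ZMod d) (l : ℤ) :
    ZMod.stdAddChar (((x.val * d + y.val * c : ℕ) : ZMod (c * d)) * (l : ZMod (c * d))) =
      ZMod.stdAddChar (x * (l : ZMod c)) * ZMod.stdAddChar (y * (l : ZMod d)) := by
  have hc : (c : ℂ) ≠ 0 := NeZero.ne _
  have hd : (d : ℂ) ≠ 0 := NeZero.ne _
  have hx := ZMod.stdAddChar_coe (N := c) (x.val * l)
  have hy := ZMod.stdAddChar_coe (N := d) (y.val * l)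
  have hxy := ZMod.stdAddChar_coe (N := c * d) ((x.val * d + y.val * c : ℕ) * l)
  simp only [Int.cast_mul, Int.cast_natCast, ZMod.natCast_zmod_val] at hx hy hxy
  rw [hx, hy, hxy, ← Complex.exp_add]
  congr 1
  push_cast
  field_simp

theorem sum_castHom_mul_castHom_mul_stdAddChar (hcd : c.Coprime d) (f : ZMod c → ℂ)
    (g : ZMod d → ℂ) (l : ℤ) :
    ∑ a : ZMod (c * d), f (ZMod.castHom (dvd_mul_right c d) (ZMod c) a) *
        g (ZMod.castHom (dvd_mul_left d c) (ZMod d) a) * ZMod.stdAddChar (a * (l : ZMod (c * d))) =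
      (∑ x : ZMod c, f (x * d) * ZMod.stdAddChar (x * (l : ZMod c))) *
        ∑ y : ZMod d, g (y * c) * ZMod.stdAddChar (y * (l : ZMod d)) := by
  rw [← (bijective_natCast_val_mul_add_val_mul hcd).sum_comp, Fintype.sum_mul_sum,
    Fintype.sum_prod_type]
  refine Fintype.sum_congr _ _ fun x => Fintype.sum_congr _ _ fun y => ?_
  rw [stdAddChar_natCast_val_mul_add_val_mul]
  simp only [Nat.cast_add, Nat.cast_mul, map_add, map_mul, map_natCast, ZMod.natCast_zmod_val,
    ZMod.natCast_self, mul_zero, add_zero, zero_add]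
  ring

end ChineseRemainder

lemma dirichletCharacter_isPrimitive_of_ne_one {R : Type*} [CommMonoidWithZero R] {p : ℕ}
    [hp : Fact p.Prime] {χ : DirichletCharacter R p} (hχ : χ ≠ 1) : χ.IsPrimitive :=
  ((Nat.dvd_prime hp.out).1 χ.conductor_dvd_level).resolve_left fun h =>
    hχ (DirichletCharacter.eq_one_iff_conductor_eq_one.2 h)

lemma sum_apply_mul_mul_stdAddChar {d : ℕ} [NeZero d] {χ : DirichletCharacter ℂ d}
    (hχ : χ.IsPrimitive) (a b : ZMod d) :
    ∑ y : ZMod d, χ (y * a) * ZMod.stdAddChar (y * b) =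
      gaussSum χ ZMod.stdAddChar * (χ a * χ⁻¹ b) := by
  have shifted := gaussSum_mulShift_of_isPrimitive ZMod.stdAddChar hχ b
  rw [mul_left_comm, mul_comm (gaussSum _ _), ← shifted, gaussSum, Finset.mul_sum]
  refine Fintype.sum_congr _ _ fun y => ?_
  rw [AddChar.mulShift_apply, map_mul, mul_comm b]
  ring

theorem stmt_14_general {d : ℕ} [NeZero d] {χ : DirichletCharacter ℂ d} (hχ : χ.IsPrimitive)
    {c : ℕ} [NeZero c] (hcd : Nat.Coprime c d) (a₁ r ℓ₂ : ℤ) :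
    ∑ a₂ : ZMod (c * d),
      χ (ZMod.castHom (dvd_mul_left d c) (ZMod d) a₂) *
        klS (-(a₁ * (a₂.val : ℤ))) r c * e ((((a₂.val : ℤ) * ℓ₂ : ℤ) : ℝ) / (c * d)) =
    gaussSum χ ZMod.stdAddChar * (χ (c : ZMod d) * χ⁻¹ (ℓ₂ : ZMod d)) *
      ∑ a₂ : ZMod c,
        klS (-(a₁ * (a₂.val : ℤ) * d)) r c * e ((((a₂.val : ℤ) * ℓ₂ : ℤ) : ℝ) / c) := by
  have klS_castHom : ∀ a : ZMod (c * d), klS (-(a₁ * (a.val : ℤ))) r c =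
      klS (-(a₁ * ((ZMod.castHom (dvd_mul_right c d) (ZMod c) a).val : ℤ))) r c := fun a =>
    klS_congr r (by simp)
  have klS_mul : ∀ x : ZMod c, klS (-(a₁ * (x.val : ℤ) * d)) r c =
      klS (-(a₁ * ((x * d).val : ℤ))) r c := fun x =>
    klS_congr r (by simp [mul_assoc])
  have crt := sum_castHom_mul_castHom_mul_stdAddChar hcd
    (fun x => klS (-(a₁ * (x.val : ℤ))) r c) χ ℓ₂
  rw [sum_apply_mul_mul_stdAddChar hχ, mul_comm (Finset.sum _ _)] at crt
  simp only [klS_castHom, klS_mul, ← Nat.cast_mul c d, e_val_mul_div, mul_comm (χ _) (klS _ _ _)]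
  exact crt

/-- Twisted Poisson/CRT evaluation: for `χ` the real quadratic character mod a prime
`d ≡ 1 (mod 4)` and `gcd(c,d) = 1`,
`∑_{a₂ mod cd} χ(a₂) S(−a₁a₂, r, c) e(a₂ℓ₂/(cd)) = √d · χ(cℓ₂) ∑_{a₂ mod c} S(−a₁a₂d, r, c) e(a₂ℓ₂/c)`. -/
theorem stmt_14 (d : ℕ) [Fact (Nat.Prime d)] (hd4 : d % 4 = 1)
    (χ : DirichletCharacter ℂ d) (hχ2 : χ ^ 2 = 1) (hχ1 : χ ≠ 1)
    (c : ℕ) [NeZero c] (hcd : Nat.Coprime c d) (a₁ r ℓ₂ : ℤ) :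
    ∑ a₂ : ZMod (c * d),
      χ (ZMod.castHom (dvd_mul_left d c) (ZMod d) a₂) *
        klS (-(a₁ * (a₂.val : ℤ))) r c * e ((((a₂.val : ℤ) * ℓ₂ : ℤ) : ℝ) / (c * d)) =
    (Real.sqrt d : ℂ) * χ ((c : ZMod d) * (ℓ₂ : ZMod d)) *
      ∑ a₂ : ZMod c,
        klS (-(a₁ * (a₂.val : ℤ) * d)) r c * e ((((a₂.val : ℤ) * ℓ₂ : ℤ) : ℝ) / c) := by
  have inv_eq_self : χ⁻¹ = χ := inv_eq_of_mul_eq_one_left (by rw [← sq, hχ2])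
  rw [stmt_14_general (dirichletCharacter_isPrimitive_of_ne_one hχ1) hcd,
    gaussSum_eq_sqrt hd4 hχ2 hχ1, inv_eq_self, map_mul]
end
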